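/- arXiv:1905.08445 — 10 statements merged into one kernel-verified Lean document; each statement's English description precedes it below -/
import Mathlib

section
/- Under Assumption H1 (with Lipschitz constant L > 0 for ∇f), the function g is prox-bounded with threshold at least 1/L: for every λ > 0 with λ·L < 1 and every x ∈ ℝ^n, the function w ↦ g(w) + ‖w − x‖²/(2λ) is bounded below on ℝ^n. -/
open Set Metric Filter Topology
open scoped RealInnerProductSpace

noncomputable section

variable {E : Type*} [NormedAddCommGroup E] [InnerProductSpace ℝ E] [FiniteDimensional ℝ E]

theorem descent_aux (f : E → ℝ) (f' : E → E) (L : ℝ)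
    (hf : ∀ x, HasGradientAt f (f' x) x)
    (hlip : ∀ x y, ‖f' x - f' y‖ ≤ L * ‖x - y‖) (x d : E) :
    f (x + d) ≤ f x + ⟪f' x, d⟫ + L / 2 * ‖d‖ ^ 2 := by
  have h1 : ∀ t : ℝ, HasDerivAt (fun t : ℝ => f (x + t • d)) ⟪f' (x + t • d), d⟫ t := by
    intro t
    have h2 : HasDerivAt (fun t : ℝ => x + t • d) d t := by
      simpa using ((hasDerivAt_id t).smul_const d).const_add x
    have h3 := (hf (x + t • d)).hasFDerivAt.comp_hasDerivAt t h2
    have h3' := h3.congr_deriv (InnerProductSpace.toDual_apply_apply (𝕜 := ℝ))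
    exact h3'
  have h4 : ∀ t : ℝ, HasDerivAt (fun t : ℝ => f x + t * ⟪f' x, d⟫ + L / 2 * ‖d‖ ^ 2 * t ^ 2)
      (⟪f' x, d⟫ + L * ‖d‖ ^ 2 * t) t := by
    intro t
    have := (((hasDerivAt_id t).mul_const ⟪f' x, d⟫).const_add (f x)).add
      ((hasDerivAt_pow 2 t).const_mul (L / 2 * ‖d‖ ^ 2))
    refine this.congr_deriv ?_
    push_cast
    ring
  have h5 := image_le_of_deriv_right_le_deriv_boundary (a := 0) (b := 1)
    (fun t _ => (h1 t).continuousAt.continuousWithinAt)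
    (fun t _ => (h1 t).hasDerivWithinAt) (by simp)
    (fun t _ => (h4 t).continuousAt.continuousWithinAt)
    (fun t _ => (h4 t).hasDerivWithinAt) (by
      intro t ht
      have h6 : ⟪f' (x + t • d) - f' x, d⟫ ≤ ‖f' (x + t • d) - f' x‖ * ‖d‖ :=
        real_inner_le_norm _ _
      have h7 := hlip (x + t • d) x
      rw [add_sub_cancel_left, norm_smul, Real.norm_of_nonneg ht.1] at h7
      have h8 := mul_le_mul_of_nonneg_right h7 (norm_nonneg d)
      rw [inner_sub_left] at h6
      nlinarith) (right_mem_Icc.2 zero_le_one)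
  simpa using h5

/-- Under Assumption H1 the function `g` is prox-bounded with threshold at least `1/L`:
for every `λ > 0` with `λ·L < 1` and every `x`, the function
`w ↦ g w + ‖w - x‖²/(2λ)` is bounded below. -/
theorem stmt0
    (f g : E → ℝ) (f' : E → E) (L : ℝ)
    (hL : 0 < L)
    (hf : ∀ x, HasGradientAt f (f' x) x)
    (hlip : ∀ x y, ‖f' x - f' y‖ ≤ L * ‖x - y‖)
    (hg : Continuous g)
    (hlevel : ∀ r : ℝ, Bornology.IsBounded {x : E | f x + g x ≤ r})
    :
    ∀ lam : ℝ, 0 < lam → lam * L < 1 →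
      ∀ x : E, BddBelow (Set.range fun w : E => g w + ‖w - x‖ ^ 2 / (2 * lam)) := by
  intro lam hlam hlL x
  have hFc : Continuous fun y => f y + g y :=
    (continuous_iff_continuousAt.2 fun y => (hf y).hasFDerivAt.continuousAt).add hg
  have hcomp : IsCompact {y : E | f y + g y ≤ 0} :=
    Metric.isCompact_of_isClosed_isBounded (isClosed_le hFc continuous_const) (hlevel 0)
  obtain ⟨m, hm⟩ := hcomp.bddBelow_image hFc.continuousOn
  have hF : ∀ y, min m 0 ≤ f y + g y := by
    intro y
    by_cases h : f y + g y ≤ 0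
    · exact (min_le_left _ _).trans (hm ⟨y, h, rfl⟩)
    · exact (min_le_right _ _).trans (not_le.1 h).le
  have hc : 0 < (1 / lam - L) / 2 := by
    have : L < 1 / lam := by rw [lt_div_iff₀ hlam]; linarith
    linarith
  obtain ⟨c, hcdef⟩ : ∃ c, c = (1 / lam - L) / 2 := ⟨_, rfl⟩
  rw [← hcdef] at hc
  refine ⟨min m 0 - f x - ‖f' x‖ ^ 2 / (4 * c), ?_⟩
  rintro _ ⟨w, rfl⟩
  have h1 := descent_aux f f' L hf hlip x (w - x)
  rw [add_sub_cancel] at h1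
  have h2 := real_inner_le_norm (f' x) (w - x)
  have h3 := hF w
  have h4 : ‖w - x‖ ^ 2 / (2 * lam) = c * ‖w - x‖ ^ 2 + L / 2 * ‖w - x‖ ^ 2 := by
    rw [hcdef]; field_simp; ring
  have h5 : ‖f' x‖ * ‖w - x‖ ≤ c * ‖w - x‖ ^ 2 + ‖f' x‖ ^ 2 / (4 * c) := by
    have h6 : c * ‖w - x‖ ^ 2 + ‖f' x‖ ^ 2 / (4 * c) - ‖f' x‖ * ‖w - x‖
        = (2 * c * ‖w - x‖ - ‖f' x‖) ^ 2 / (4 * c) := by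
      field_simp; ring
    have h7 : 0 ≤ (2 * c * ‖w - x‖ - ‖f' x‖) ^ 2 / (4 * c) := by positivity
    linarith
  show _ ≤ g w + ‖w - x‖ ^ 2 / (2 * lam)
  rw [h4]
  linarith
end
end

section
/- Let f : ℝ^n → ℝ be differentiable with L-Lipschitz gradient ∇f (L ≥ 0) and let g : ℝ^n → ℝ be any function. Then for every x ∈ ℝ^n the proximal subdifferential satisfies the exact sum rule ∂_P(f + g)(x) = {∇f(x) + ξ : ξ ∈ ∂_P g(x)}. -/
open Set Metric Filter Topology
open scoped RealInnerProductSpace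

noncomputable section

variable {E : Type*} [NormedAddCommGroup E] [InnerProductSpace ℝ E] [FiniteDimensional ℝ E]

/-- The proximal subdifferential of `ψ` at `x`. -/
def proxSubdiff (ψ : E → ℝ) (x : E) : Set E :=
  {ξ | ∃ ρ > (0:ℝ), ∃ η > (0:ℝ), ∀ y, ‖y - x‖ < η →
    ψ y ≥ ψ x + ⟪ξ, y - x⟫ - ρ * ‖y - x‖ ^ 2}

theorem grad_bound (f : E → ℝ) (f' : E → E) (L : ℝ) (hL : 0 ≤ L)
    (hf : ∀ x, HasGradientAt f (f' x) x)
    (hlip : ∀ x y, ‖f' x - f' y‖ ≤ L * ‖x - y‖) (x y : E) :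
    |f y - f x - ⟪f' x, y - x⟫| ≤ L * ‖y - x‖ ^ 2 := by
  have h := (convex_closedBall x ‖y - x‖).norm_image_sub_le_of_norm_hasFDerivWithin_le'
    (f := f) (f' := fun z => InnerProductSpace.toDual ℝ E (f' z))
    (φ := InnerProductSpace.toDual ℝ E (f' x)) (C := L * ‖y - x‖) (x := x) (y := y)
    (fun z _ => (hf z).hasFDerivAt.hasFDerivWithinAt)
    (fun z hz => by
      rw [← map_sub, LinearIsometryEquiv.norm_map]
      rw [mem_closedBall, dist_eq_norm] at hz
      exact (hlip z x).trans (mul_le_mul_of_nonneg_left hz hL))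
    (mem_closedBall_self (norm_nonneg _))
    (by rw [mem_closedBall, dist_eq_norm])
  rw [InnerProductSpace.toDual_apply_apply, Real.norm_eq_abs] at h
  calc _ ≤ _ := h
    _ = _ := by ring

/-- Exact sum rule for the proximal subdifferential: if `f` is differentiable with
`L`-Lipschitz gradient and `g` is arbitrary, then
`∂_P (f+g)(x) = {∇f x + ξ : ξ ∈ ∂_P g x}`. -/
theorem stmt1 (f g : E → ℝ) (f' : E → E) (L : ℝ) (hL : 0 ≤ L)
    (hf : ∀ x, HasGradientAt f (f' x) x)
    (hlip : ∀ x y, ‖f' x - f' y‖ ≤ L * ‖x - y‖) :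
    ∀ x : E, proxSubdiff (fun y => f y + g y) x = (fun ξ => f' x + ξ) '' proxSubdiff g x := by
  intro x
  have hb := grad_bound f f' L hL hf hlip x
  ext ξ
  constructor
  · rintro ⟨ρ, hρ, η, hη, h⟩
    refine ⟨ξ - f' x, ⟨ρ + L, by positivity, η, hη, fun y hy => ?_⟩, by simp⟩
    have h1 := h y hy
    have h2 := (abs_le.1 (hb y)).2
    rw [inner_sub_left]
    simp only at h1
    linarith
  · rintro ⟨ζ, ⟨ρ, hρ, η, hη, h⟩, rfl⟩
    refine ⟨ρ + L, by positivity, η, hη, fun y hy => ?_⟩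
    have h1 := h y hy
    have h2 := (abs_le.1 (hb y)).1
    simp only
    rw [inner_add_left]
    linarith
end
end

section
/- Under Assumption H1 and the Bregman setting, for every x ∈ ℝ^n and every t ∈ T(x), the vector ξ = ∇f(t) − ∇f(x) − (1/ε)(∇K(t) − ∇K(x)) belongs to the proximal subdifferential ∂_P F(t), and ‖ξ‖ ≤ (L + M/ε)‖x − t‖; in particular, if x ∈ T(x) then 0 ∈ ∂_P F(x). -/
open Set Metric Filter Topology
open scoped RealInnerProductSpace

noncomputable section

variable {E : Type*} [NormedAddCommGroup E] [InnerProductSpace ℝ E] [FiniteDimensional ℝ E]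

/-- The Bregman distance generated by `K` (with gradient `K'`). -/
def bregD (K : E → ℝ) (K' : E → E) (x y : E) : ℝ := K y - K x - ⟪K' x, y - x⟫

/-- The Bregman proximal mapping: the set of global minimizers of
`y ↦ ⟪∇f x, y - x⟫ + g y + D(x,y)/ε`. -/
def bregT (f' : E → E) (g : E → ℝ) (K : E → ℝ) (K' : E → E) (ε : ℝ) (x : E) : Set E :=
  {y | ∀ z, ⟪f' x, y - x⟫ + g y + bregD K K' x y / ε ≤ ⟪f' x, z - x⟫ + g z + bregD K K' x z / ε}

/-- The Bregman proximal envelope. -/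
def bregEnv (f : E → ℝ) (f' : E → E) (g : E → ℝ) (K : E → ℝ) (K' : E → E) (ε : ℝ) (x : E) : ℝ :=
  ⨅ y : E, (f x + ⟪f' x, y - x⟫ + g y + bregD K K' x y / ε)

theorem grad_quad_aux (f : E → ℝ) (f' : E → E) (L : ℝ) (hL : 0 < L)
    (hf : ∀ x, HasGradientAt f (f' x) x)
    (hlip : ∀ x y, ‖f' x - f' y‖ ≤ L * ‖x - y‖) (t y : E) :
    |f y - f t - ⟪f' t, y - t⟫| ≤ L * ‖y - t‖ ^ 2 := by
  have h := Convex.norm_image_sub_le_of_norm_hasFDerivWithin_le' (𝕜 := ℝ) (f := f)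
    (f' := fun x => InnerProductSpace.toDual ℝ E (f' x))
    (φ := InnerProductSpace.toDual ℝ E (f' t)) (C := L * ‖y - t‖)
    (s := Metric.closedBall t ‖y - t‖) (x := t) (y := y)
    (fun x _ => (hf x).hasFDerivAt.hasFDerivWithinAt)
    (by
      intro x hx
      rw [← map_sub, LinearIsometryEquiv.norm_map]
      refine (hlip x t).trans ?_
      rw [Metric.mem_closedBall, dist_eq_norm] at hx
      gcongr)
    (convex_closedBall _ _) (by simp) (by simp [dist_eq_norm])
  simp only [InnerProductSpace.toDual_apply_apply, Real.norm_eq_abs] at h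
  calc _ ≤ _ := h
    _ = _ := by ring

/-- For every `t ∈ T(x)` the vector `ξ = ∇f t - ∇f x - (1/ε)(∇K t - ∇K x)` belongs to
`∂_P F(t)`, with `‖ξ‖ ≤ (L + M/ε)‖x - t‖`; in particular `x ∈ T(x)` implies
`0 ∈ ∂_P F(x)`. -/
theorem stmt4
    (f g : E → ℝ) (f' : E → E) (L : ℝ)
    (hL : 0 < L)
    (hf : ∀ x, HasGradientAt f (f' x) x)
    (hlip : ∀ x y, ‖f' x - f' y‖ ≤ L * ‖x - y‖)
    (hg : Continuous g)
    (hlevel : ∀ r : ℝ, Bornology.IsBounded {x : E | f x + g x ≤ r})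
    (K : E → ℝ) (K' : E → E) (m M : ℝ)
    (hm : 0 < m) (hmM : m ≤ M)
    (hK : ∀ x, HasGradientAt K (K' x) x)
    (hKstrong : ∀ x y : E, K x + ⟪K' x, y - x⟫ + m / 2 * ‖y - x‖ ^ 2 ≤ K y)
    (hKlip : ∀ x y, ‖K' x - K' y‖ ≤ M * ‖x - y‖)
    (ε : ℝ) (hε : 0 < ε)
    :
    ∀ x : E, ∀ t ∈ bregT f' g K K' ε x,
      (f' t - f' x - (1 / ε) • (K' t - K' x)) ∈ proxSubdiff (fun y => f y + g y) t ∧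
      ‖f' t - f' x - (1 / ε) • (K' t - K' x)‖ ≤ (L + M / ε) * ‖x - t‖ ∧
      (x ∈ bregT f' g K K' ε x → (0 : E) ∈ proxSubdiff (fun y => f y + g y) x) := by
  have hM : 0 < M := lt_of_lt_of_le hm hmM
  have key : ∀ x : E, ∀ t ∈ bregT f' g K K' ε x,
      (f' t - f' x - (1 / ε) • (K' t - K' x)) ∈ proxSubdiff (fun y => f y + g y) t := by
    intro x t ht
    refine ⟨L + M / ε, by positivity, 1, one_pos, fun y _ => ?_⟩
    have h1 := (abs_le.1 (grad_quad_aux f f' L hL hf hlip t y)).1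
    have h2 := (abs_le.1 (grad_quad_aux K K' M hM hK hKlip t y)).2
    have h3 := ht y
    have e1 : ∀ v : E, ⟪v, y - x⟫ = ⟪v, y - t⟫ + ⟪v, t - x⟫ := by
      intro v
      rw [← inner_add_right]; congr 1; abel
    simp only [bregD, e1] at h3
    have h4 : (K y - K t - ⟪K' t, y - t⟫) / ε ≤ M * ‖y - t‖ ^ 2 / ε := by gcongr
    simp only [inner_sub_left, real_inner_smul_left]
    simp only [div_eq_mul_inv] at *
    nlinarith
  intro x t ht
  refine ⟨key x t ht, ?_, fun hx => ?_⟩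
  · have h1 := hlip t x
    have h2 := hKlip t x
    rw [norm_sub_rev t x] at h1 h2
    calc _ ≤ ‖f' t - f' x‖ + ‖(1 / ε) • (K' t - K' x)‖ := norm_sub_le _ _
      _ = ‖f' t - f' x‖ + (1 / ε) * ‖K' t - K' x‖ := by
        rw [norm_smul, Real.norm_of_nonneg (by positivity)]
      _ ≤ L * ‖x - t‖ + (1 / ε) * (M * ‖x - t‖) := by gcongr
      _ = _ := by ring
  · simpa using key x x hx
end
end

section
/- Under Assumption H1 and the Bregman setting with 0 < ε < m/L, the Bregman proximal envelope E and the Bregman proximal gap function G = (F − E)/ε are continuous functions on ℝ^n. -/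
open Set Metric Filter Topology
open scoped RealInnerProductSpace

noncomputable section

variable {E : Type*} [NormedAddCommGroup E] [InnerProductSpace ℝ E] [FiniteDimensional ℝ E]

theorem aux_descent (f : E → ℝ) (f' : E → E) (L : ℝ)
    (hf : ∀ x, HasGradientAt f (f' x) x)
    (hlip : ∀ x y, ‖f' x - f' y‖ ≤ L * ‖x - y‖) (x y : E) :
    f y ≤ f x + ⟪f' x, y - x⟫ + L / 2 * ‖y - x‖ ^ 2 := by
  set d := y - x with hd
  have hder : ∀ t : ℝ, HasDerivAt
      (fun t : ℝ => f (x + t • d) - t * ⟪f' x, d⟫ - L / 2 * t ^ 2 * ‖d‖ ^ 2)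
      (⟪f' (x + t • d), d⟫ - ⟪f' x, d⟫ - L * t * ‖d‖ ^ 2) t := by
    intro t
    have h1 : HasDerivAt (fun t : ℝ => x + t • d) d t := by
      simpa using ((hasDerivAt_id t).smul_const d).const_add x
    have h2 := (hf (x + t • d)).hasFDerivAt.comp_hasDerivAt t h1
    have h3 : HasDerivAt (fun t : ℝ => t * ⟪f' x, d⟫) ⟪f' x, d⟫ t := by
      simpa using (hasDerivAt_id t).mul_const ⟪f' x, d⟫
    have h4 : HasDerivAt (fun t : ℝ => L / 2 * t ^ 2 * ‖d‖ ^ 2) (L * t * ‖d‖ ^ 2) t := by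
      have := (((hasDerivAt_id t).pow 2).const_mul (L / 2)).mul_const (‖d‖ ^ 2)
      refine this.congr_deriv ?_
      simp only [id, Nat.cast_ofNat]; ring
    refine ((h2.sub h3).sub h4).congr_deriv ?_
    simp
  have hanti : AntitoneOn (fun t : ℝ => f (x + t • d) - t * ⟪f' x, d⟫ - L / 2 * t ^ 2 * ‖d‖ ^ 2)
      (Icc 0 1) := by
    apply antitoneOn_of_deriv_nonpos (convex_Icc 0 1)
    · exact fun t _ => (hder t).continuousAt.continuousWithinAt
    · exact fun t _ => (hder t).differentiableAt.differentiableWithinAt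
    · intro t ht
      rw [interior_Icc] at ht
      rw [(hder t).deriv, ← inner_sub_left]
      have h1 := real_inner_le_norm (f' (x + t • d) - f' x) d
      have h2 := hlip (x + t • d) x
      rw [add_sub_cancel_left, norm_smul, Real.norm_of_nonneg ht.1.le] at h2
      have h3 := mul_le_mul_of_nonneg_right h2 (norm_nonneg d)
      nlinarith
  have := hanti (left_mem_Icc.2 zero_le_one) (right_mem_Icc.2 zero_le_one) zero_le_one
  simp only [one_smul, zero_smul, hd, add_sub_cancel, add_zero] at this
  rw [← hd] at this
  linarith

/-- Continuity of the Bregman proximal envelope `E` and of the gap function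
`G = (F - E)/ε` when `0 < ε < m/L`. -/
theorem stmt5
    (f g : E → ℝ) (f' : E → E) (L : ℝ)
    (hL : 0 < L)
    (hf : ∀ x, HasGradientAt f (f' x) x)
    (hlip : ∀ x y, ‖f' x - f' y‖ ≤ L * ‖x - y‖)
    (hg : Continuous g)
    (hlevel : ∀ r : ℝ, Bornology.IsBounded {x : E | f x + g x ≤ r})
    (K : E → ℝ) (K' : E → E) (m M : ℝ)
    (hm : 0 < m) (hmM : m ≤ M)
    (hK : ∀ x, HasGradientAt K (K' x) x)
    (hKstrong : ∀ x y : E, K x + ⟪K' x, y - x⟫ + m / 2 * ‖y - x‖ ^ 2 ≤ K y)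
    (hKlip : ∀ x y, ‖K' x - K' y‖ ≤ M * ‖x - y‖)
    (ε : ℝ) (hε : 0 < ε)
    (hεL : ε * L < m) :
    Continuous (bregEnv f f' g K K' ε) ∧
    Continuous (fun x : E => ((f x + g x) - bregEnv f f' g K K' ε x) / ε) := by
  have hfc : Continuous f := continuous_iff_continuousAt.2 fun x => (hf x).continuousAt
  have hKc : Continuous K := continuous_iff_continuousAt.2 fun x => (hK x).continuousAt
  have hf'c : Continuous f' :=
    (LipschitzWith.of_dist_le_mul (K := ⟨L, hL.le⟩) fun x y => by
      rw [dist_eq_norm, dist_eq_norm]; exact hlip x y).continuous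
  have hK'c : Continuous K' :=
    (LipschitzWith.of_dist_le_mul (K := ⟨M, (hm.trans_le hmM).le⟩) fun x y => by
      rw [dist_eq_norm, dist_eq_norm]; exact hKlip x y).continuous
  have hFc : Continuous (fun x => f x + g x) := hfc.add hg
  set φ : E → E → ℝ := fun x y => f x + ⟪f' x, y - x⟫ + g y + bregD K K' x y / ε with hφ
  have hφc : Continuous (fun p : E × E => φ p.1 p.2) := by
    simp only [hφ, bregD]
    fun_prop
  have hφx : ∀ x, φ x x = f x + g x := by
    intro x; simp [hφ, bregD]
  obtain ⟨B, hB⟩ : ∃ B, ∀ x, B ≤ f x + g x := by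
    have hc : IsCompact {x : E | f x + g x ≤ f 0 + g 0} :=
      isCompact_of_isClosed_isBounded (isClosed_le hFc continuous_const) (hlevel _)
    obtain ⟨z, hz, hmin⟩ := hc.exists_isMinOn ⟨0, le_refl (f 0 + g 0)⟩ hFc.continuousOn
    refine ⟨f z + g z, fun x => ?_⟩
    by_cases hx : f x + g x ≤ f 0 + g 0
    · exact hmin hx
    · exact le_trans hz (not_le.1 hx).le
  obtain ⟨c, hc, hlow⟩ : ∃ c > 0, ∀ x y, B + c * ‖y - x‖ ^ 2 ≤ φ x y := by
    refine ⟨m / (2 * ε) - L / 2, ?_, fun x y => ?_⟩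
    · rw [gt_iff_lt, sub_pos, div_lt_div_iff₀ (by norm_num) (by positivity)]
      linarith
    · have h1 := aux_descent f f' L hf hlip x y
      have h2 : m / (2 * ε) * ‖y - x‖ ^ 2 ≤ bregD K K' x y / ε := by
        rw [le_div_iff₀ hε]
        have := hKstrong x y
        have h3 : m / (2 * ε) * ‖y - x‖ ^ 2 * ε = m / 2 * ‖y - x‖ ^ 2 := by
          field_simp
        rw [h3]; unfold bregD; linarith
      have h4 := hB y
      simp only [hφ]
      linarith
  have hbdd : ∀ x, BddBelow (range (φ x)) := fun x => ⟨B, by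
    rintro _ ⟨y, rfl⟩
    have := hlow x y
    have : 0 ≤ c * ‖y - x‖ ^ 2 := by positivity
    linarith⟩
  have key : Continuous (bregEnv f f' g K K' ε) := by
    rw [continuous_iff_continuousAt]
    intro x0
    set R := f x0 + g x0 + 1 with hR
    set s := 1 + (R - B) / c with hs
    have hRB : 0 ≤ (R - B) / c := div_nonneg (by linarith [hB x0]) hc.le
    have hcs : R - B ≤ c * s ^ 2 := by
      have : R - B = c * ((R - B) / c) := by field_simp
      rw [this]
      apply mul_le_mul_of_nonneg_left _ hc.le
      nlinarith
    have hcont : Continuous (fun x => sInf (φ x '' closedBall x0 (1 + s))) :=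
      (isCompact_closedBall x0 (1 + s)).continuous_sInf hφc
    refine hcont.continuousAt.congr ?_
    have e1 : ∀ᶠ x in 𝓝 x0, f x + g x < R :=
      hFc.continuousAt.eventually_lt continuousAt_const (by simp [hR])
    filter_upwards [e1, ball_mem_nhds x0 one_pos] with x hx hxb
    have hxm : x ∈ closedBall x0 (1 + s) := by
      rw [mem_closedBall]; rw [mem_ball] at hxb; linarith
    have hb2 : BddBelow (φ x '' closedBall x0 (1 + s)) :=
      (hbdd x).mono (image_subset_range _ _)
    change _ = ⨅ y, φ x y
    apply le_antisymm
    · refine le_ciInf fun y => ?_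
      by_cases hy : y ∈ closedBall x0 (1 + s)
      · exact csInf_le hb2 ⟨y, hy, rfl⟩
      · refine (csInf_le hb2 ⟨x, hxm, rfl⟩).trans ?_
        rw [hφx]
        have h1 : s ≤ ‖y - x‖ := by
          rw [mem_closedBall, not_le] at hy
          rw [mem_ball] at hxb
          have := dist_triangle y x x0
          rw [← dist_eq_norm]; linarith
        have h2 : s ^ 2 ≤ ‖y - x‖ ^ 2 := pow_le_pow_left₀ (by linarith) h1 2
        have h3 := mul_le_mul_of_nonneg_left h2 hc.le
        linarith [hlow x y]
    · refine le_csInf ⟨_, x, hxm, rfl⟩ ?_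
      rintro _ ⟨y, _, rfl⟩
      exact ciInf_le (hbdd x) y
  exact ⟨key, (hFc.sub key).div_const ε⟩
end
end

section
/- Generalized descent inequality (fully nonconvex case): under Assumption H1 and the Bregman setting with ε > 0, for all x, u ∈ ℝ^n and every t ∈ T(x), one has 2·(F(t) − F(u)) ≤ (M/ε + 2 + 3L)·‖u − x‖² − ‖u − t‖² − (m/ε − (L + 2))·‖x − t‖². -/
open Set Metric Filter Topology
open scoped RealInnerProductSpace

noncomputable section

variable {E : Type*} [NormedAddCommGroup E] [InnerProductSpace ℝ E] [FiniteDimensional ℝ E]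

theorem descent_aux_s6 {E : Type*} [NormedAddCommGroup E] [InnerProductSpace ℝ E]
    [FiniteDimensional ℝ E] (h : E → ℝ) (h' : E → E) (C : ℝ)
    (hh : ∀ x, HasGradientAt h (h' x) x)
    (hlip : ∀ x y, ‖h' x - h' y‖ ≤ C * ‖x - y‖) (x y : E) :
    |h y - h x - ⟪h' x, y - x⟫| ≤ C / 2 * ‖y - x‖ ^ 2 := by
  set v := y - x with hv
  have hd : ∀ s : ℝ, HasDerivAt (fun s : ℝ => h (x + s • v) - s * ⟪h' x, v⟫)
      (⟪h' (x + s • v), v⟫ - ⟪h' x, v⟫) s := by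
    intro s
    have h1 : HasDerivAt (fun s : ℝ => x + s • v) v s := by
      simpa using ((hasDerivAt_id s).smul_const v).const_add x
    have h2 := (hh (x + s • v)).hasFDerivAt.comp_hasDerivAt s h1
    have h3 := (hasDerivAt_id s).mul_const ⟪h' x, v⟫
    have h4 : HasDerivAt (fun s : ℝ => h (x + s • v)) ⟪h' (x + s • v), v⟫ s := by
      simpa [Function.comp_def] using h2
    have h5 : HasDerivAt (fun s : ℝ => s * ⟪h' x, v⟫) ⟪h' x, v⟫ s := by
      simpa using h3
    exact h4.sub h5
  have hb : ∀ s : ℝ, 0 ≤ s →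
      |⟪h' (x + s • v), v⟫ - ⟪h' x, v⟫| ≤ C * s * ‖v‖ ^ 2 := by
    intro s hs
    rw [← inner_sub_left]
    refine (abs_real_inner_le_norm _ _).trans ?_
    have h1 := hlip (x + s • v) x
    rw [add_sub_cancel_left, norm_smul, Real.norm_of_nonneg hs] at h1
    calc _ ≤ (C * (s * ‖v‖)) * ‖v‖ := by gcongr
      _ = _ := by ring
  have hB : ∀ s : ℝ, HasDerivAt (fun s : ℝ => C / 2 * ‖v‖ ^ 2 * s ^ 2) (C * s * ‖v‖ ^ 2) s := by
    intro s
    have h1 := (hasDerivAt_pow 2 s).const_mul (C / 2 * ‖v‖ ^ 2)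
    have e : C / 2 * ‖v‖ ^ 2 * (((2 : ℕ) : ℝ) * s ^ (2 - 1)) = C * s * ‖v‖ ^ 2 := by
      norm_num
      ring
    rw [e] at h1
    exact h1
  have key := image_norm_le_of_norm_deriv_right_le_deriv_boundary' (a := (0:ℝ)) (b := 1)
    (f := fun s : ℝ => (h (x + s • v) - s * ⟪h' x, v⟫) - h x)
    (f' := fun s => ⟪h' (x + s • v), v⟫ - ⟪h' x, v⟫)
    (B := fun s : ℝ => C / 2 * ‖v‖ ^ 2 * s ^ 2) (B' := fun s => C * s * ‖v‖ ^ 2)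
    (fun s _ => ((hd s).sub_const (h x)).continuousAt.continuousWithinAt)
    (fun s _ => ((hd s).sub_const (h x)).hasDerivWithinAt)
    (by simp)
    (fun s _ => (hB s).continuousAt.continuousWithinAt)
    (fun s _ => (hB s).hasDerivWithinAt)
    (fun s hs => by rw [Real.norm_eq_abs]; exact hb s hs.1)
    (x := 1) (by simp)
  have e : x + (1:ℝ) • v = y := by simp [hv]
  simp only [e, Real.norm_eq_abs, one_mul, one_pow, mul_one] at key
  convert key using 2
  ring

/-- Generalized descent inequality in the fully nonconvex case. -/
theorem stmt6
    (f g : E → ℝ) (f' : E → E) (L : ℝ)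
    (hL : 0 < L)
    (hf : ∀ x, HasGradientAt f (f' x) x)
    (hlip : ∀ x y, ‖f' x - f' y‖ ≤ L * ‖x - y‖)
    (hg : Continuous g)
    (hlevel : ∀ r : ℝ, Bornology.IsBounded {x : E | f x + g x ≤ r})
    (K : E → ℝ) (K' : E → E) (m M : ℝ)
    (hm : 0 < m) (hmM : m ≤ M)
    (hK : ∀ x, HasGradientAt K (K' x) x)
    (hKstrong : ∀ x y : E, K x + ⟪K' x, y - x⟫ + m / 2 * ‖y - x‖ ^ 2 ≤ K y)
    (hKlip : ∀ x y, ‖K' x - K' y‖ ≤ M * ‖x - y‖)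
    (ε : ℝ) (hε : 0 < ε)
    :
    ∀ x u : E, ∀ t ∈ bregT f' g K K' ε x,
      2 * ((f t + g t) - (f u + g u)) ≤
        (M / ε + 2 + 3 * L) * ‖u - x‖ ^ 2 - ‖u - t‖ ^ 2
          - (m / ε - (L + 2)) * ‖x - t‖ ^ 2 := by
  intro x u t ht
  have h0 := ht u
  have h1 := (abs_le.1 (descent_aux_s6 f f' L hf hlip x t)).2
  have h2 := (abs_le.1 (descent_aux_s6 f f' L hf hlip x u)).1
  have h3 := (abs_le.1 (descent_aux_s6 K K' M hK hKlip x u)).2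
  have h4 := hKstrong x t
  have h5 : bregD K K' x u / ε ≤ (M / 2 * ‖u - x‖ ^ 2) / ε := by
    unfold bregD; gcongr
  have h6 : (m / 2 * ‖t - x‖ ^ 2) / ε ≤ bregD K K' x t / ε := by
    unfold bregD; gcongr; linarith
  have e5 : (M / 2 * ‖u - x‖ ^ 2) / ε = M / ε * ‖u - x‖ ^ 2 / 2 := by ring
  have e6 : (m / 2 * ‖t - x‖ ^ 2) / ε = m / ε * ‖t - x‖ ^ 2 / 2 := by ring
  rw [e5] at h5
  rw [e6] at h6
  rw [norm_sub_rev x t]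
  have h7 : ‖u - t‖ ^ 2 ≤ 2 * ‖u - x‖ ^ 2 + 2 * ‖t - x‖ ^ 2 := by
    have h8 : ‖u - t‖ ≤ ‖u - x‖ + ‖t - x‖ := by
      rw [norm_sub_rev t x]; exact norm_sub_le_norm_sub_add_norm_sub u x t
    nlinarith [sq_nonneg (‖u - x‖ - ‖t - x‖), norm_nonneg (u - t)]
  have h9 : 0 ≤ L * ‖u - x‖ ^ 2 := by positivity
  linarith
end
end

section
/- Finite length property: let (x^k) be a VBPG sequence, let x̄ be an accumulation point of (x^k) (some subsequence converges to x̄), and F̄ = F(x̄). Suppose the level-set subdifferential error bound holds at x̄ with exponent γ ∈ (0,1], radius η ∈ (0,2] and level parameter ν > 0, i.e. there is c₃ > 0 with infDist(x, [F ≤ F̄])^γ ≤ c₃·‖ξ‖ for every x ∈ 𝔅(x̄;η,ν) and every ξ ∈ ∂_P F(x). Then ∑_{k=0}^∞ ‖x^{k+1} − x^k‖ < ∞ (the sequence has finite length), and the whole sequence (x^k) converges to x̄. -/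
open Set Metric Filter Topology
open scoped RealInnerProductSpace

noncomputable section

variable {E : Type*} [NormedAddCommGroup E] [InnerProductSpace ℝ E] [FiniteDimensional ℝ E]

theorem aux_descent_s11 {E : Type*} [NormedAddCommGroup E] [InnerProductSpace ℝ E] [CompleteSpace E]
    (h : E → ℝ) (h' : E → E) (C : ℝ)
    (hh : ∀ x, HasGradientAt h (h' x) x) (hlip : ∀ x y, ‖h' x - h' y‖ ≤ C * ‖x - y‖) (x y : E) :
    h y - h x - ⟪h' x, y - x⟫ ≤ C / 2 * ‖y - x‖ ^ 2 := by
  set d := y - x with hd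
  have hder : ∀ t : ℝ, HasDerivAt
      (fun t : ℝ => h (x + t • d) - t * ⟪h' x, d⟫ - C / 2 * t ^ 2 * ‖d‖ ^ 2)
      (⟪h' (x + t • d), d⟫ - ⟪h' x, d⟫ - C * t * ‖d‖ ^ 2) t := by
    intro t
    have h1 : HasDerivAt (fun t : ℝ => x + t • d) d t := by
      have := ((hasDerivAt_id t).smul_const d).const_add x
      simpa using this
    have h2 := (hh (x + t • d)).hasFDerivAt.comp_hasDerivAt t h1
    have h3 : HasDerivAt (fun t : ℝ => t * ⟪h' x, d⟫) ⟪h' x, d⟫ t := by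
      simpa using (hasDerivAt_id t).mul_const ⟪h' x, d⟫
    have h4 : HasDerivAt (fun t : ℝ => C / 2 * t ^ 2 * ‖d‖ ^ 2) (C * t * ‖d‖ ^ 2) t := by
      have := (((hasDerivAt_pow 2 t).const_mul (C / 2)).mul_const (‖d‖ ^ 2))
      refine this.congr_deriv ?_
      norm_num
      left
      ring
    have h5 := (h2.sub h3).sub h4
    refine HasDerivAt.congr_deriv (f := fun t : ℝ =>
      h (x + t • d) - t * ⟪h' x, d⟫ - C / 2 * t ^ 2 * ‖d‖ ^ 2) h5 ?_
    simp
  have hanti : AntitoneOn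
      (fun t : ℝ => h (x + t • d) - t * ⟪h' x, d⟫ - C / 2 * t ^ 2 * ‖d‖ ^ 2) (Set.Icc 0 1) := by
    apply antitoneOn_of_deriv_nonpos (convex_Icc 0 1)
    · exact fun t _ => (hder t).continuousAt.continuousWithinAt
    · exact fun t _ => (hder t).differentiableAt.differentiableWithinAt
    · intro t ht
      rw [interior_Icc] at ht
      rw [(hder t).deriv, ← inner_sub_left]
      have h1 := real_inner_le_norm (h' (x + t • d) - h' x) d
      have h2 := hlip (x + t • d) x
      rw [add_sub_cancel_left, norm_smul, Real.norm_of_nonneg ht.1.le] at h2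
      have h3 := mul_le_mul_of_nonneg_right h2 (norm_nonneg d)
      nlinarith
  have := hanti (show (0:ℝ) ∈ Set.Icc (0:ℝ) 1 by simp) (show (1:ℝ) ∈ Set.Icc (0:ℝ) 1 by simp)
    zero_le_one
  have e : x + d = y := by rw [hd]; abel
  simp [e] at this
  linarith

theorem aux_descent_abs {E : Type*} [NormedAddCommGroup E] [InnerProductSpace ℝ E]
    [CompleteSpace E] (h : E → ℝ) (h' : E → E) (C : ℝ)
    (hh : ∀ x, HasGradientAt h (h' x) x) (hlip : ∀ x y, ‖h' x - h' y‖ ≤ C * ‖x - y‖) (x y : E) :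
    -(C / 2 * ‖y - x‖ ^ 2) ≤ h y - h x - ⟪h' x, y - x⟫ := by
  have := aux_descent_s11 (fun z => - h z) (fun z => - h' z) C
    (fun z => by
      have := (hh z).hasFDerivAt.neg
      rw [hasGradientAt_iff_hasFDerivAt, map_neg]
      exact this)
    (fun x y => by
      rw [← neg_sub', norm_neg]; exact hlip x y) x y
  rw [inner_neg_left] at this
  linarith

theorem aux_seq {E : Type*} [NormedAddCommGroup E] [CompleteSpace E]
    (x : ℕ → E) (v : ℕ → ℝ) (xbar : E) (a A η ν : ℝ) (ha : 0 < a) (hA : 0 < A) (hη : 0 < η)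
    (hν : 0 < ν)
    (hdesc : ∀ k, v (k+1) + a * ‖x (k+1) - x k‖ ^ 2 ≤ v k)
    (φ : ℕ → ℕ) (hφ : StrictMono φ)
    (hacc : Tendsto (fun k => x (φ k)) atTop (nhds xbar))
    (hv : Tendsto (fun k => v (φ k)) atTop (nhds 0))
    (hEB : ∀ k, ‖x (k+1) - xbar‖ < η → 0 < v (k+1) → v (k+1) < ν → ‖x (k+1) - x k‖ ≤ 1 →
      v (k+2) ≤ A * ‖x (k+1) - x k‖ ^ 2) :
    Summable (fun k => ‖x (k+1) - x k‖) ∧ Tendsto x atTop (nhds xbar) := by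
  have hanti : Antitone v := antitone_nat_of_succ_le (fun k => by
    have := hdesc k
    have : 0 ≤ a * ‖x (k+1) - x k‖ ^ 2 := by positivity
    linarith)
  have hv0 : ∀ k, 0 ≤ v k := by
    intro k
    apply le_of_tendsto hv
    filter_upwards [eventually_ge_atTop k] with j hj
    exact hanti (hj.trans hφ.le_apply)
  set r : ℕ → ℝ := fun k => √(v k) with hr
  have hr0 : ∀ k, 0 ≤ r k := fun k => Real.sqrt_nonneg _
  set θ := A / (a + A) with hθ
  have hθ0 : 0 ≤ θ := by positivity
  have hθ1 : θ < 1 := by rw [hθ, div_lt_one (by positivity)]; linarith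
  set q := √θ with hq
  have hq1 : q < 1 := by rw [hq, Real.sqrt_lt' one_pos]; simpa using hθ1
  have hq0 : 0 ≤ q := Real.sqrt_nonneg _
  set w := √a with hw
  have hw0 : 0 < w := Real.sqrt_pos.2 ha
  set b := 1 / (w * (1 - q)) with hb
  have h1q : 0 < 1 - q := by linarith
  have hb0 : 0 < b := by positivity
  have hbq : b * (1 - q) = 1 / w := by rw [hb]; field_simp
  have hbw : 1 / w ≤ b := by rw [← hbq]; nlinarith
  have hs : ∀ k, ‖x (k+1) - x k‖ ≤ 1 / w * r k := by
    intro k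
    have h1 : a * ‖x (k+1) - x k‖ ^ 2 ≤ v k := by have := hdesc k; have := hv0 (k+1); linarith
    have h2 : w * ‖x (k+1) - x k‖ ≤ r k := by
      apply Real.le_sqrt_of_sq_le
      rw [mul_pow, hw, Real.sq_sqrt ha.le]; exact h1
    rw [one_div, ← div_eq_inv_mul, le_div_iff₀ hw0]; linarith
  set Φ : ℕ → ℝ := fun k => b * (r k + r (k+1)) with hΦ
  have hΦ0 : ∀ k, 0 ≤ Φ k := fun k => mul_nonneg hb0.le (add_nonneg (hr0 _) (hr0 _))
  have hsΦ : ∀ k, ‖x (k+1) - x k‖ ≤ Φ k := by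
    intro k
    have h1 := hs k
    have h2 := mul_le_mul_of_nonneg_right hbw (hr0 k)
    have h3 := mul_nonneg hb0.le (hr0 (k+1))
    simp only [hΦ]; linarith
  have hstep : ∀ k, v k < ν → v k < a → ‖x (k+1) - xbar‖ < η →
      ‖x (k+1) - x k‖ ≤ Φ k - Φ (k+1) := by
    intro k h1 h2 h3
    have hd := hdesc k
    have hs1 : ‖x (k+1) - x k‖ ≤ 1 := by
      have := hv0 (k+1)
      by_contra hc
      push Not at hc
      have h1s : 1 < ‖x (k+1) - x k‖ ^ 2 := by nlinarith
      nlinarith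
    have hle : v (k+2) ≤ A * ‖x (k+1) - x k‖ ^ 2 := by
      rcases (hv0 (k+1)).lt_or_eq with h | h
      · exact hEB k h3 h ((hanti (Nat.le_succ k)).trans_lt h1) hs1
      · have : v (k+2) ≤ v (k+1) := hanti (Nat.le_succ _)
        have : 0 ≤ A * ‖x (k+1) - x k‖ ^ 2 := by positivity
        linarith
    have hvθ : v (k+2) ≤ θ * v k := by
      have h4 : v (k+2) ≤ v (k+1) := hanti (Nat.le_succ _)
      rw [hθ, div_mul_eq_mul_div, le_div_iff₀ (by positivity)]
      nlinarith
    have hrq : r (k+2) ≤ q * r k := by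
      simp only [hr, hq]
      rw [← Real.sqrt_mul hθ0]
      exact Real.sqrt_le_sqrt hvθ
    have h5 := hs k
    have h6 : Φ k - Φ (k+1) = b * (r k - r (k+2)) := by simp only [hΦ]; ring
    have h7 : b * ((1 - q) * r k) ≤ b * (r k - r (k+2)) :=
      mul_le_mul_of_nonneg_left (by linarith) hb0.le
    rw [h6]
    rw [← mul_assoc, hbq] at h7
    linarith
  -- starting index
  have hstart : ∃ N, v N < ν ∧ v N < a ∧ ‖x N - xbar‖ + Φ N < η := by
    have t1 : Tendsto (fun k => ‖x (φ k) - xbar‖ + b * (√(v (φ k)) + √(v (φ k)))) atTop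
        (nhds 0) := by
      have e1 : Tendsto (fun k => ‖x (φ k) - xbar‖) atTop (nhds 0) := by
        simpa using (hacc.sub_const xbar).norm
      have e2 : Tendsto (fun k => √(v (φ k))) atTop (nhds 0) := by
        simpa using hv.sqrt
      simpa using e1.add ((e2.add e2).const_mul b)
    obtain ⟨j, hj1, hj2, hj3⟩ := ((hv.eventually_lt_const hν).and
      ((hv.eventually_lt_const ha).and (t1.eventually_lt_const hη))).exists
    refine ⟨φ j, hj1, hj2, lt_of_le_of_lt ?_ hj3⟩
    have : r (φ j + 1) ≤ r (φ j) := Real.sqrt_le_sqrt (hanti (Nat.le_succ _))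
    have := mul_le_mul_of_nonneg_left this hb0.le
    simp only [hΦ, hr] at *
    linarith
  obtain ⟨N, hN1, hN2, hN3⟩ := hstart
  have hball : ∀ k, ‖x k - xbar‖ + Φ k < η → ‖x (k+1) - xbar‖ < η := by
    intro k hk
    have : ‖x (k+1) - xbar‖ ≤ ‖x (k+1) - x k‖ + ‖x k - xbar‖ := norm_sub_le_norm_sub_add_norm_sub ..
    have := hsΦ k
    linarith
  have hind : ∀ i, ‖x (N+i) - xbar‖ + Φ (N+i) < η := by
    intro i
    induction i with
    | zero => exact hN3
    | succ i ih =>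
      have h1 := hstep (N+i) ((hanti (Nat.le_add_right _ _)).trans_lt hN1)
        ((hanti (Nat.le_add_right _ _)).trans_lt hN2) (hball _ ih)
      have : ‖x (N+i+1) - xbar‖ ≤ ‖x (N+i+1) - x (N+i)‖ + ‖x (N+i) - xbar‖ :=
        norm_sub_le_norm_sub_add_norm_sub ..
      rw [← add_assoc]
      linarith
  have hfin : ∀ i, ‖x (N+i+1) - x (N+i)‖ ≤ Φ (N+i) - Φ (N+i+1) := fun i =>
    hstep (N+i) ((hanti (Nat.le_add_right _ _)).trans_lt hN1)
        ((hanti (Nat.le_add_right _ _)).trans_lt hN2) (hball _ (hind i))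
  have hsum : Summable (fun k => ‖x (k+1) - x k‖) := by
    rw [← summable_nat_add_iff N]
    apply summable_of_sum_range_le (c := Φ N) (fun _ => norm_nonneg _)
    intro n
    have : ∑ i ∈ Finset.range n, ‖x (i + N + 1) - x (i + N)‖ ≤ Φ N - Φ (N + n) := by
      induction n with
      | zero => simp
      | succ n ih =>
        rw [Finset.sum_range_succ]
        have := hfin n
        rw [add_comm n N, ← add_assoc]
        linarith
    have := hΦ0 (N+n)
    linarith
  refine ⟨hsum, ?_⟩
  have hc : CauchySeq x := cauchySeq_of_summable_dist (by
    refine hsum.congr (fun k => ?_)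
    rw [dist_comm, dist_eq_norm])
  obtain ⟨l, hl⟩ := cauchySeq_tendsto_of_complete hc
  have := tendsto_nhds_unique (hl.comp hφ.tendsto_atTop) hacc
  rwa [this] at hl

/-- Finite length property of a VBPG sequence under a level-set subdifferential
error bound at an accumulation point, and convergence of the whole sequence. -/
theorem stmt11
    (f g : E → ℝ) (f' : E → E) (L : ℝ)
    (hL : 0 < L)
    (hf : ∀ x, HasGradientAt f (f' x) x)
    (hlip : ∀ x y, ‖f' x - f' y‖ ≤ L * ‖x - y‖)
    (hg : Continuous g)
    (hlevel : ∀ r : ℝ, Bornology.IsBounded {x : E | f x + g x ≤ r})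
    (Kk : ℕ → E → ℝ) (Kk' : ℕ → E → E) (mk Mk : ℕ → ℝ) (εk : ℕ → ℝ) (εlo εhi : ℝ)
    (x : ℕ → E) (m M : ℝ) (hm : 0 < m) (hmM : m ≤ M)
    (hmk : ∀ k, m ≤ mk k) (hMk : ∀ k, Mk k ≤ M)
    (hKk : ∀ k y, HasGradientAt (Kk k) (Kk' k y) y)
    (hKkstrong : ∀ k (y z : E), Kk k y + ⟪Kk' k y, z - y⟫ + mk k / 2 * ‖z - y‖ ^ 2 ≤ Kk k z)
    (hKklip : ∀ k (y z : E), ‖Kk' k y - Kk' k z‖ ≤ Mk k * ‖y - z‖)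
    (hεlo : 0 < εlo) (hεle : εlo ≤ εhi) (hεhi : εhi * L < m)
    (hεk : ∀ k, εk k ∈ Set.Icc εlo εhi)
    (hiter : ∀ k, x (k+1) ∈ bregT f' g (Kk k) (Kk' k) (εk k) (x k))
    (xbar : E) (φ : ℕ → ℕ) (hφ : StrictMono φ)
    (hacc : Tendsto (fun k => x (φ k)) atTop (nhds xbar))
    (γ η ν c₃ : ℝ)
    (hγ0 : 0 < γ) (hγ1 : γ ≤ 1) (hη0 : 0 < η) (hη2 : η ≤ 2) (hν : 0 < ν) (hc₃ : 0 < c₃)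
    (hEB : ∀ y : E, ‖y - xbar‖ < η → f xbar + g xbar < f y + g y →
      f y + g y < f xbar + g xbar + ν →
      ∀ ξ ∈ proxSubdiff (fun z => f z + g z) y,
        Metric.infDist y {z : E | f z + g z ≤ f xbar + g xbar} ^ γ ≤ c₃ * ‖ξ‖) :
    Summable (fun k => ‖x (k+1) - x k‖) ∧ Tendsto x atTop (nhds xbar) := by
  haveI : CompleteSpace E := FiniteDimensional.complete ℝ E
  haveI : ProperSpace E := FiniteDimensional.proper ℝ E
  have hM : 0 < M := hm.trans_le hmM
  have hεhi0 : 0 < εhi := hεlo.trans_le hεle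
  have hε0 : ∀ k, 0 < εk k := fun k => hεlo.trans_le (hεk k).1
  have hKl : ∀ k (y z : E), ‖Kk' k y - Kk' k z‖ ≤ M * ‖y - z‖ := fun k y z =>
    (hKklip k y z).trans (mul_le_mul_of_nonneg_right (hMk k) (norm_nonneg _))
  set a := (m / εhi - L) / 2 with ha
  have ha0 : 0 < a := by
    have : L < m / εhi := by rw [lt_div_iff₀ hεhi0]; linarith
    rw [ha]; linarith
  set G := L + M / εlo with hG
  have hG0 : 0 < G := by positivity
  have hkey : ∀ k u, f (x (k+1)) + g (x (k+1)) + a * ‖x (k+1) - x k‖ ^ 2 ≤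
      f u + g u + G / 2 * ‖u - x k‖ ^ 2 := by
    intro k u
    have h1 := hiter k u
    have h2 := aux_descent_s11 f f' L hf hlip (x k) (x (k+1))
    have h3 := aux_descent_abs f f' L hf hlip (x k) u
    have h4 : bregD (Kk k) (Kk' k) (x k) u / εk k ≤ M / εlo / 2 * ‖u - x k‖ ^ 2 := by
      have := aux_descent_s11 (Kk k) (Kk' k) M (hKk k) (hKl k) (x k) u
      have e : bregD (Kk k) (Kk' k) (x k) u / εk k ≤ (M / 2 * ‖u - x k‖ ^ 2) / εk k := by
        apply div_le_div_of_nonneg_right _ (hε0 k).le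
        exact this
      have e2 : (M / 2 * ‖u - x k‖ ^ 2) / εk k ≤ (M / 2 * ‖u - x k‖ ^ 2) / εlo :=
        div_le_div_of_nonneg_left (by positivity) hεlo (hεk k).1
      have e3 : (M / 2 * ‖u - x k‖ ^ 2) / εlo = M / εlo / 2 * ‖u - x k‖ ^ 2 := by ring
      linarith
    have h5 : m / εhi / 2 * ‖x (k+1) - x k‖ ^ 2 ≤
        bregD (Kk k) (Kk' k) (x k) (x (k+1)) / εk k := by
      have := hKkstrong k (x k) (x (k+1))
      have e0 : m / 2 * ‖x (k+1) - x k‖ ^ 2 ≤ mk k / 2 * ‖x (k+1) - x k‖ ^ 2 :=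
        mul_le_mul_of_nonneg_right (by linarith [hmk k]) (by positivity)
      have e : (m / 2 * ‖x (k+1) - x k‖ ^ 2) / εk k ≤
          bregD (Kk k) (Kk' k) (x k) (x (k+1)) / εk k := by
        apply div_le_div_of_nonneg_right _ (hε0 k).le
        unfold bregD
        linarith
      have e2 : (m / 2 * ‖x (k+1) - x k‖ ^ 2) / εhi ≤ (m / 2 * ‖x (k+1) - x k‖ ^ 2) / εk k :=
        div_le_div_of_nonneg_left (by positivity) (hε0 k) (hεk k).2
      have e3 : (m / 2 * ‖x (k+1) - x k‖ ^ 2) / εhi = m / εhi / 2 * ‖x (k+1) - x k‖ ^ 2 := by ring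
      linarith
    rw [ha, hG]
    nlinarith
  have hsub : ∀ k, f' (x (k+1)) - f' (x k) - (εk k)⁻¹ • (Kk' k (x (k+1)) - Kk' k (x k)) ∈
      proxSubdiff (fun z => f z + g z) (x (k+1)) := by
    intro k
    have hp := inv_pos.2 (hε0 k)
    refine ⟨(L + (εk k)⁻¹ * M) / 2, by positivity, 1, one_pos, fun y _ => ?_⟩
    have h1 := hiter k y
    have h2 := aux_descent_abs f f' L hf hlip (x (k+1)) y
    have h3 := aux_descent_s11 (Kk k) (Kk' k) M (hKk k) (hKl k) (x (k+1)) y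
    have h4 := mul_le_mul_of_nonneg_left h3 hp.le
    simp only [bregD, div_eq_inv_mul] at h1
    have e1 : y - x k = (y - x (k+1)) + (x (k+1) - x k) := by abel
    rw [e1] at h1
    simp only [inner_add_right] at h1
    simp only [inner_sub_left, real_inner_smul_left]
    nlinarith
  have hξ : ∀ k, ‖f' (x (k+1)) - f' (x k) - (εk k)⁻¹ • (Kk' k (x (k+1)) - Kk' k (x k))‖ ≤
      G * ‖x (k+1) - x k‖ := by
    intro k
    have hp := inv_pos.2 (hε0 k)
    refine (norm_sub_le _ _).trans ?_
    rw [norm_smul, Real.norm_of_nonneg hp.le]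
    have h1 := hlip (x (k+1)) (x k)
    have h2 : (εk k)⁻¹ * ‖Kk' k (x (k+1)) - Kk' k (x k)‖ ≤ εlo⁻¹ * (M * ‖x (k+1) - x k‖) :=
      mul_le_mul (inv_anti₀ hεlo (hεk k).1) (hKl k _ _) (norm_nonneg _) (by positivity)
    rw [hG, div_eq_inv_mul]
    linarith
  have hFc : Continuous (fun z => f z + g z) :=
    (continuous_iff_continuousAt.2 fun z => (hf z).continuousAt).add hg
  set S := {z : E | f z + g z ≤ f xbar + g xbar} with hS
  have hSc : IsClosed S := isClosed_le hFc continuous_const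
  have hSn : S.Nonempty := ⟨xbar, le_refl (f xbar + g xbar)⟩
  set H := (c₃ * G) ^ (1 / γ) with hH
  have hH0 : 0 < H := by positivity
  refine aux_seq x (fun k => f (x k) + g (x k) - (f xbar + g xbar)) xbar a (G / 2 * H ^ 2) η ν ha0
    (by positivity) hη0 hν ?_ φ hφ hacc ?_ ?_
  · intro k
    have := hkey k (x k)
    simp at this
    linarith
  · have := ((hFc.tendsto xbar).comp hacc).sub_const (f xbar + g xbar)
    simpa using this
  · intro k h1 h2 h3 h4
    obtain ⟨u, hu, hud⟩ := hSc.exists_infDist_eq_dist hSn (x (k+1))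
    have h5 := hEB (x (k+1)) h1 (by linarith) (by linarith) _ (hsub k)
    have h6 : Metric.infDist (x (k+1)) S ^ γ ≤ (c₃ * G) * ‖x (k+1) - x k‖ := by
      have := mul_le_mul_of_nonneg_left (hξ k) hc₃.le
      linarith
    have h7 : Metric.infDist (x (k+1)) S ≤ H * ‖x (k+1) - x k‖ := by
      have e1 := Real.rpow_le_rpow (Real.rpow_nonneg Metric.infDist_nonneg _) h6
        (show 0 ≤ 1 / γ by positivity)
      rw [← Real.rpow_mul Metric.infDist_nonneg, mul_one_div_cancel hγ0.ne', Real.rpow_one,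
        Real.mul_rpow (by positivity) (norm_nonneg _)] at e1
      refine e1.trans (mul_le_mul_of_nonneg_left ?_ hH0.le)
      exact Real.rpow_le_self_of_le_one (norm_nonneg _) h4 (by rw [le_div_iff₀ hγ0]; linarith)
    rw [hud, dist_comm, dist_eq_norm] at h7
    have h8 := hkey (k+1) u
    have h9 : ‖u - x (k+1)‖ ^ 2 ≤ (H * ‖x (k+1) - x k‖) ^ 2 :=
      pow_le_pow_left₀ (norm_nonneg _) h7 2
    have h10 : f u + g u ≤ f xbar + g xbar := hu
    have h11 : 0 ≤ a * ‖x (k+1+1) - x (k+1)‖ ^ 2 := by positivity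
    have h12 := mul_le_mul_of_nonneg_left h9 (show 0 ≤ G / 2 by positivity)
    rw [mul_pow] at h12
    show f (x (k+1+1)) + g (x (k+1+1)) - (f xbar + g xbar) ≤ _
    linarith
end
end

section
/- Under Assumption H1 and the Bregman setting with g semiconvex of modulus ρ ≥ 0 and 0 < ε, ε·L < m, ε·ρ < m, let t(x) denote the unique element of T(x). Then for every x ∈ ℝ^n and every ν ∈ ∂_P g(x): ((m − ερ)/(2ε²))·‖x − t(x)‖² ≤ G(x) ≤ ‖∇f(x) + ν‖²/(2(m − ερ)), and consequently ‖x − t(x)‖ ≤ (ε/(m − ερ))·‖∇f(x) + ν‖. -/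
open Set Metric Filter Topology
open scoped RealInnerProductSpace

noncomputable section

variable {E : Type*} [NormedAddCommGroup E] [InnerProductSpace ℝ E] [FiniteDimensional ℝ E]

theorem aux_lim {A B C δ : ℝ} (hδ : 0 < δ)
    (h : ∀ l : ℝ, 0 < l → l < δ → l < 1 → A ≤ B + l * C) : A ≤ B := by
  by_contra hAB
  push Not at hAB
  have hC : 0 < |C| + 1 := by positivity
  set l := min (δ / 2) (min (1 / 2) ((A - B) / (2 * (|C| + 1)))) with hl
  have h1 : l ≤ δ / 2 := min_le_left _ _
  have h2 : l ≤ 1 / 2 := (min_le_right _ _).trans (min_le_left _ _)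
  have h3 : l ≤ (A - B) / (2 * (|C| + 1)) := (min_le_right _ _).trans (min_le_right _ _)
  have hab : 0 < A - B := by linarith
  have h0 : 0 < l := by
    rw [hl]; refine lt_min (by linarith) (lt_min (by norm_num) (by positivity))
  have h4 := h l h0 (by linarith) (by linarith)
  rw [le_div_iff₀ (by positivity)] at h3
  have h5 := mul_le_mul_of_nonneg_left (le_abs_self C) h0.le
  nlinarith

theorem aux_semi {V : Type*} [NormedAddCommGroup V] [InnerProductSpace ℝ V] {g : V → ℝ} {ρ : ℝ}
    (hsemi : ConvexOn ℝ Set.univ (fun y : V => g y + ρ / 2 * ‖y‖ ^ 2)) (x d : V) {l : ℝ}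
    (h0 : 0 < l) (h1 : l < 1) :
    g (x + l • d) ≤ (1 - l) * g x + l * g (x + d) + ρ / 2 * (l * (1 - l)) * ‖d‖ ^ 2 := by
  have h := hsemi.2 (Set.mem_univ x) (Set.mem_univ (x + d)) (by linarith : 0 ≤ 1 - l) h0.le
    (by ring)
  have e : (1 - l) • x + l • (x + d) = x + l • d := by module
  rw [e] at h
  simp only [smul_eq_mul, norm_add_sq_real, inner_smul_right, norm_smul, mul_pow,
    Real.norm_eq_abs, sq_abs] at h
  linarith

theorem aux_K {V : Type*} [NormedAddCommGroup V] [InnerProductSpace ℝ V] {K : V → ℝ} {K' : V → V}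
    {m : ℝ}
    (hK : ∀ x y : V, K x + ⟪K' x, y - x⟫ + m / 2 * ‖y - x‖ ^ 2 ≤ K y) (x d : V) {l : ℝ}
    (h0 : 0 < l) (h1 : l < 1) :
    K (x + l • d) ≤ (1 - l) * K x + l * K (x + d) - m / 2 * (l * (1 - l)) * ‖d‖ ^ 2 := by
  have ha := hK (x + l • d) x
  have hb := hK (x + l • d) (x + d)
  have e1 : x - (x + l • d) = (-l) • d := by module
  have e2 : x + d - (x + l • d) = (1 - l) • d := by module
  rw [e1] at ha
  rw [e2] at hb
  simp only [inner_smul_right, norm_smul, mul_pow, Real.norm_eq_abs, sq_abs] at ha hb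
  have h2 := mul_le_mul_of_nonneg_left ha (by linarith : 0 ≤ 1 - l)
  have h3 := mul_le_mul_of_nonneg_left hb h0.le
  linarith

theorem aux_prox {V : Type*} [NormedAddCommGroup V] [InnerProductSpace ℝ V] {g : V → ℝ} {ρ : ℝ}
    (hsemi : ConvexOn ℝ Set.univ (fun y : V => g y + ρ / 2 * ‖y‖ ^ 2)) (x d v : V)
    (hv : v ∈ proxSubdiff g x) :
    g x + ⟪v, d⟫ - ρ / 2 * ‖d‖ ^ 2 ≤ g (x + d) := by
  obtain ⟨r, hr, η, hη, h⟩ := hv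
  refine aux_lim (C := (r - ρ / 2) * ‖d‖ ^ 2) (δ := η / (‖d‖ + 1)) (by positivity) ?_
  intro l h0 hl h1
  have hs := aux_semi hsemi x d h0 h1
  have hp := h (x + l • d) (by
    rw [add_sub_cancel_left, norm_smul, Real.norm_eq_abs, abs_of_pos h0]
    rw [lt_div_iff₀ (by positivity)] at hl
    linarith)
  rw [add_sub_cancel_left] at hp
  simp only [inner_smul_right, norm_smul, mul_pow, Real.norm_eq_abs, sq_abs] at hp
  refine le_of_mul_le_mul_left ?_ h0
  linarith

/-- Bounds relating the displacement `‖x - t(x)‖`, the gap `G(x)` and the proximal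
subgradients of `F` when `g` is semiconvex. -/
theorem stmt14
    (f g : E → ℝ) (f' : E → E) (L : ℝ)
    (hL : 0 < L)
    (hf : ∀ x, HasGradientAt f (f' x) x)
    (hlip : ∀ x y, ‖f' x - f' y‖ ≤ L * ‖x - y‖)
    (hg : Continuous g)
    (hlevel : ∀ r : ℝ, Bornology.IsBounded {x : E | f x + g x ≤ r})
    (K : E → ℝ) (K' : E → E) (m M : ℝ)
    (hm : 0 < m) (hmM : m ≤ M)
    (hK : ∀ x, HasGradientAt K (K' x) x)
    (hKstrong : ∀ x y : E, K x + ⟪K' x, y - x⟫ + m / 2 * ‖y - x‖ ^ 2 ≤ K y)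
    (hKlip : ∀ x y, ‖K' x - K' y‖ ≤ M * ‖x - y‖)
    (ε : ℝ) (hε : 0 < ε)
    (ρ : ℝ) (hρ : 0 ≤ ρ)
    (hsemi : ConvexOn ℝ Set.univ (fun y : E => g y + ρ / 2 * ‖y‖ ^ 2))
    (hεL : ε * L < m) (hερ : ε * ρ < m)
    (t : E → E) (ht : ∀ x, bregT f' g K K' ε x = {t x}) :
    ∀ x : E, ∀ ν' ∈ proxSubdiff g x,
      (m - ε * ρ) / (2 * ε ^ 2) * ‖x - t x‖ ^ 2 ≤
        ((f x + g x) - bregEnv f f' g K K' ε x) / ε ∧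
      ((f x + g x) - bregEnv f f' g K K' ε x) / ε ≤
        ‖f' x + ν'‖ ^ 2 / (2 * (m - ε * ρ)) ∧
      ‖x - t x‖ ≤ ε / (m - ε * ρ) * ‖f' x + ν'‖ := by
  intro x v hv
  set s := t x with hs
  have hmin : ∀ z, ⟪f' x, s - x⟫ + g s + bregD K K' x s / ε
      ≤ ⟪f' x, z - x⟫ + g z + bregD K K' x z / ε := by
    have : s ∈ bregT f' g K K' ε x := by rw [ht x]; rfl
    exact this
  have henv : bregEnv f f' g K K' ε x = f x + ⟪f' x, s - x⟫ + g s + bregD K K' x s / ε := by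
    apply le_antisymm
    · refine ciInf_le (f := fun y => f x + ⟪f' x, y - x⟫ + g y + bregD K K' x y / ε) ?_ s
      refine ⟨f x + ⟪f' x, s - x⟫ + g s + bregD K K' x s / ε, ?_⟩
      rintro _ ⟨z, rfl⟩
      have := hmin z
      simp only
      linarith
    · refine le_ciInf fun z => ?_
      have := hmin z
      linarith
  have hc : 0 < m - ε * ρ := by linarith
  set w := f' x + v with hw
  set D := bregD K K' x s with hD
  set G := (f x + g x) - bregEnv f f' g K K' ε x with hG
  have hGe : G = g x - ⟪f' x, s - x⟫ - g s - D / ε := by rw [hG, henv]; ring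
  have hDε : D / ε * ε = D := by field_simp
  -- lower bound, multiplied by ε
  have low : (m - ε * ρ) / 2 * ‖x - s‖ ^ 2 ≤ ε * G := by
    refine aux_lim (C := (m - ε * ρ) / 2 * ‖x - s‖ ^ 2) (δ := 1) one_pos ?_
    intro l h0 _ h1
    have a1 := aux_semi hsemi s (x - s) h0 h1
    have a2 := aux_K hKstrong s (x - s) h0 h1
    have a3 := hmin (s + l • (x - s))
    rw [add_sub_cancel] at a1 a2
    have e : s + l • (x - s) - x = (1 - l) • (s - x) := by module
    have hD2 : bregD K K' x (s + l • (x - s)) / ε * ε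
      = K (s + l • (x - s)) - K x - (1 - l) * ⟪K' x, s - x⟫ := by
      rw [div_mul_cancel₀ _ hε.ne', bregD, e, inner_smul_right]
    have hD3 : D = K s - K x - ⟪K' x, s - x⟫ := rfl
    rw [e, inner_smul_right] at a3
    have a4 := mul_le_mul_of_nonneg_right a3 hε.le
    rw [add_mul, add_mul, add_mul, add_mul, hD2, hDε] at a4
    have a5 := mul_le_mul_of_nonneg_right a1 hε.le
    have hεG : ε * G = ε * g x - ε * ⟪f' x, s - x⟫ - ε * g s - D := by
      rw [hGe]; linear_combination -hDε
    rw [hεG]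
    refine le_of_mul_le_mul_left ?_ h0
    rw [hD3] at a4 ⊢
    linarith
  have up : 2 * (m - ε * ρ) * G ≤ ε * ‖w‖ ^ 2 := by
    have b1 := aux_prox hsemi x (s - x) v hv
    rw [add_sub_cancel] at b1
    have b2 : m / 2 * ‖s - x‖ ^ 2 ≤ D := by
      have := hKstrong x s
      rw [hD, bregD]; linarith
    have b3 : ε * G ≤ - ε * ⟪w, s - x⟫ - (m - ε * ρ) / 2 * ‖s - x‖ ^ 2 := by
      have hεG : ε * G = ε * g x - ε * ⟪f' x, s - x⟫ - ε * g s - D := by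
        rw [hGe]; linear_combination -hDε
      rw [hεG, hw, inner_add_left]
      have := mul_le_mul_of_nonneg_left b1 hε.le
      linarith
    have b4 : -⟪w, s - x⟫ ≤ ‖w‖ * ‖s - x‖ :=
      (neg_le_abs _).trans (abs_real_inner_le_norm _ _)
    have b5 := mul_le_mul_of_nonneg_left b4 hε.le
    refine le_of_mul_le_mul_left ?_ hε
    have b6 : ε * G ≤ ε * (‖w‖ * ‖s - x‖) - (m - ε * ρ) / 2 * ‖s - x‖ ^ 2 := by linarith
    have b7 := mul_le_mul_of_nonneg_left b6 (by linarith : 0 ≤ 2 * (m - ε * ρ))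
    nlinarith [sq_nonneg (ε * ‖w‖ - (m - ε * ρ) * ‖s - x‖)]
  refine ⟨?_, ?_, ?_⟩
  · rw [le_div_iff₀ hε, div_mul_eq_mul_div, div_mul_eq_mul_div, div_le_iff₀ (by positivity)]
    have := mul_le_mul_of_nonneg_left low hε.le
    linarith
  · rw [div_le_div_iff₀ hε (by positivity)]
    linarith
  · rw [div_mul_eq_mul_div, le_div_iff₀ hc]
    refine (fun h1 h2 => abs_le_of_sq_le_sq' h1 h2 |>.2) ?_ (by positivity)
    have c1 := mul_le_mul_of_nonneg_left up hε.le
    have c2 := mul_le_mul_of_nonneg_left low (by linarith : 0 ≤ 2 * (m - ε * ρ))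
    linarith
end
end

section
/- Level-set subdifferential error bound under weak metric subregularity: assume Assumption H1 and let x̄ satisfy 0 ∈ ∂_P F(x̄), F̄ = F(x̄), and X̄_P = {x | 0 ∈ ∂_P F(x)}. Suppose (Assumption H3) there is δ > 0 such that F(y) ≤ F̄ for every y ∈ X̄_P with ‖y − x̄‖ ≤ δ, and suppose ∂_P F is weakly metrically subregular at x̄ for 0: there exist η, ν, c₅ > 0 such that ‖ξ‖ ≥ c₅ · infDist(x, X̄_P) for every x ∈ 𝔅(x̄;η,ν) and every ξ ∈ ∂_P F(x). Then the level-set subdifferential error bound holds at x̄ with exponent γ = 1: there exist η', ν', c₃ > 0 such that infDist(x, [F ≤ F̄]) ≤ c₃ · ‖ξ‖ for every x ∈ 𝔅(x̄;η',ν') and every ξ ∈ ∂_P F(x). -/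
open Set Metric Filter Topology
open scoped RealInnerProductSpace

noncomputable section

variable {E : Type*} [NormedAddCommGroup E] [InnerProductSpace ℝ E] [FiniteDimensional ℝ E]

/-- Weak metric subregularity of `∂_P F` at a proximal critical point, together with
the proper separation assumption (H₃), implies the level-set subdifferential error
bound with exponent `γ = 1`. -/
theorem stmt17
    (f g : E → ℝ) (f' : E → E) (L : ℝ)
    (hL : 0 < L)
    (hf : ∀ x, HasGradientAt f (f' x) x)
    (hlip : ∀ x y, ‖f' x - f' y‖ ≤ L * ‖x - y‖)
    (hg : Continuous g)
    (hlevel : ∀ r : ℝ, Bornology.IsBounded {x : E | f x + g x ≤ r})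
    (xbar : E) (hcrit : (0 : E) ∈ proxSubdiff (fun z => f z + g z) xbar)
    (δ : ℝ) (hδ : 0 < δ)
    (hH3 : ∀ y : E, (0 : E) ∈ proxSubdiff (fun z => f z + g z) y → ‖y - xbar‖ ≤ δ →
      f y + g y ≤ f xbar + g xbar)
    (η ν c₅ : ℝ) (hη : 0 < η) (hν : 0 < ν) (hc₅ : 0 < c₅)
    (hsub : ∀ y : E, ‖y - xbar‖ < η → f xbar + g xbar < f y + g y →
      f y + g y < f xbar + g xbar + ν →
      ∀ ξ ∈ proxSubdiff (fun z => f z + g z) y,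
        c₅ * Metric.infDist y {z : E | (0 : E) ∈ proxSubdiff (fun w => f w + g w) z}
          ≤ ‖ξ‖) :
    ∃ η' ν' c₃ : ℝ, 0 < η' ∧ 0 < ν' ∧ 0 < c₃ ∧
      ∀ y : E, ‖y - xbar‖ < η' → f xbar + g xbar < f y + g y →
        f y + g y < f xbar + g xbar + ν' →
        ∀ ξ ∈ proxSubdiff (fun z => f z + g z) y,
          Metric.infDist y {z : E | f z + g z ≤ f xbar + g xbar} ≤ c₃ * ‖ξ‖ := by
  refine ⟨min η (δ / 2), ν, 1 / c₅, lt_min hη (by linarith), hν, by positivity, ?_⟩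
  intro y hy h1 h2 ξ hξ
  have h3 := hsub y (lt_of_lt_of_le hy (min_le_left _ _)) h1 h2 ξ hξ
  have hyδ : ‖y - xbar‖ < δ / 2 := lt_of_lt_of_le hy (min_le_right _ _)
  set X : Set E := {z : E | (0 : E) ∈ proxSubdiff (fun w => f w + g w) z} with hX
  have hmem : xbar ∈ X := hcrit
  have hXd : Metric.infDist y X < δ / 2 := by
    refine lt_of_le_of_lt (Metric.infDist_le_dist_of_mem hmem) ?_
    rwa [dist_eq_norm]
  have key : Metric.infDist y {z : E | f z + g z ≤ f xbar + g xbar} ≤ Metric.infDist y X := by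
    by_contra hcon
    push Not at hcon
    obtain ⟨z, hz, hdz⟩ := (Metric.infDist_lt_iff ⟨xbar, hmem⟩).1 (lt_min hXd hcon)
    have hd1 := lt_of_lt_of_le hdz (min_le_left _ _)
    have hd2 := lt_of_lt_of_le hdz (min_le_right _ _)
    have hzb : ‖z - xbar‖ ≤ δ := by
      have ht := dist_triangle z y xbar
      rw [dist_comm z y, dist_eq_norm z xbar, dist_eq_norm y xbar] at ht
      linarith
    have hzl : z ∈ {z : E | f z + g z ≤ f xbar + g xbar} := hH3 z hz hzb
    exact absurd (Metric.infDist_le_dist_of_mem hzl) (not_le.2 hd2)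
  refine key.trans ?_
  rw [one_div, inv_mul_eq_div, le_div_iff₀ hc₅, mul_comm]
  exact h3
end
end

section
/- Bregman proximal gap condition implies the KL inequality with exponent q/2: under Assumption H1 and the Bregman setting, suppose g is semiconvex with modulus ρ ≥ 0 and 0 < ε, ε·L < m, ε·ρ < m. Suppose the Bregman proximal gap condition holds at x̄: there exist η, ν, μ > 0 and q ∈ [0,2) such that G(x) ≥ μ·(F(x) − F̄)^q for all x ∈ 𝔅(x̄;η,ν), where F̄ = F(x̄). Then for every x ∈ 𝔅(x̄;η,ν) and every ν' ∈ ∂_P g(x): ‖∇f(x) + ν'‖ ≥ √(2(m − ερ)μ) · (F(x) − F̄)^{q/2}. -/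
open Set Metric Filter Topology
open scoped RealInnerProductSpace

noncomputable section

variable {E : Type*} [NormedAddCommGroup E] [InnerProductSpace ℝ E] [FiniteDimensional ℝ E]

theorem prox_global (g : E → ℝ) (ρ : ℝ) 
    (hsemi : ConvexOn ℝ Set.univ (fun y : E => g y + ρ / 2 * ‖y‖ ^ 2))
    (x ξ : E) (h : ξ ∈ proxSubdiff g x) (z : E) :
    g x + ⟪ξ, z - x⟫ - ρ / 2 * ‖z - x‖ ^ 2 ≤ g z := by
  obtain ⟨r, hr, η, hη, H⟩ := h
  have key : ∀ᶠ t : ℝ in 𝓝[>] 0, g x + ⟪ξ, z - x⟫ - ρ / 2 * (1 - t) * ‖z - x‖ ^ 2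
      - r * t * ‖z - x‖ ^ 2 ≤ g z := by
    have h1 : ∀ᶠ t : ℝ in 𝓝[>] 0, t * ‖z - x‖ < η := by
      have hc : Tendsto (fun t : ℝ => t * ‖z - x‖) (𝓝[>] 0) (𝓝 (0 * ‖z - x‖)) :=
        ((continuous_id.mul continuous_const).tendsto 0).mono_left nhdsWithin_le_nhds
      rw [zero_mul] at hc
      exact hc.eventually (gt_mem_nhds hη)
    have h2 : ∀ᶠ t : ℝ in 𝓝[>] 0, t < 1 :=
      (gt_mem_nhds one_pos).filter_mono nhdsWithin_le_nhds
    filter_upwards [h1, h2, self_mem_nhdsWithin] with t ht1 ht2 ht0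
    have ht0 : 0 < t := ht0
    have e : (1 - t) • x + t • z - x = t • (z - x) := by module
    have A := H ((1 - t) • x + t • z) (by
      rw [e, norm_smul, Real.norm_of_nonneg ht0.le]; exact ht1)
    have B := hsemi.2 (mem_univ x) (mem_univ z) (sub_nonneg.2 ht2.le) ht0.le (by ring)
    rw [e, norm_smul, Real.norm_of_nonneg ht0.le, inner_smul_right] at A
    simp only [smul_eq_mul] at B
    have C : ‖(1 - t) • x + t • z‖ ^ 2 = (1 - t) * ‖x‖ ^ 2 + t * ‖z‖ ^ 2
        - t * (1 - t) * ‖z - x‖ ^ 2 := by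
      rw [norm_add_sq_real, norm_sub_sq_real, norm_smul, norm_smul, inner_smul_left,
        inner_smul_right, Real.norm_of_nonneg ht0.le, Real.norm_of_nonneg (sub_nonneg.2 ht2.le),
        real_inner_comm x z]
      simp
      ring
    rw [C] at B
    refine le_of_mul_le_mul_left ?_ ht0
    linear_combination A + B
  have lim : Tendsto (fun t : ℝ => g x + ⟪ξ, z - x⟫ - ρ / 2 * (1 - t) * ‖z - x‖ ^ 2
      - r * t * ‖z - x‖ ^ 2) (𝓝[>] 0)
      (𝓝 (g x + ⟪ξ, z - x⟫ - ρ / 2 * (1 - 0) * ‖z - x‖ ^ 2 - r * 0 * ‖z - x‖ ^ 2)) := by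
    refine Tendsto.mono_left (Continuous.tendsto ?_ 0) nhdsWithin_le_nhds
    fun_prop
  have := le_of_tendsto lim key
  simpa using this

/-- The Bregman proximal gap condition with exponent `q` implies the KL inequality with
exponent `q/2` (when `g` is semiconvex). -/
theorem stmt18
    (f g : E → ℝ) (f' : E → E) (L : ℝ)
    (hL : 0 < L)
    (hf : ∀ x, HasGradientAt f (f' x) x)
    (hlip : ∀ x y, ‖f' x - f' y‖ ≤ L * ‖x - y‖)
    (hg : Continuous g)
    (hlevel : ∀ r : ℝ, Bornology.IsBounded {x : E | f x + g x ≤ r})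
    (K : E → ℝ) (K' : E → E) (m M : ℝ)
    (hm : 0 < m) (hmM : m ≤ M)
    (hK : ∀ x, HasGradientAt K (K' x) x)
    (hKstrong : ∀ x y : E, K x + ⟪K' x, y - x⟫ + m / 2 * ‖y - x‖ ^ 2 ≤ K y)
    (hKlip : ∀ x y, ‖K' x - K' y‖ ≤ M * ‖x - y‖)
    (ε : ℝ) (hε : 0 < ε)
    (ρ : ℝ) (hρ : 0 ≤ ρ)
    (hsemi : ConvexOn ℝ Set.univ (fun y : E => g y + ρ / 2 * ‖y‖ ^ 2))
    (hεL : ε * L < m) (hερ : ε * ρ < m)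
    (xbar : E) (η ν μ q : ℝ)
    (hη : 0 < η) (hν : 0 < ν) (hμ : 0 < μ) (hq0 : 0 ≤ q) (hq2 : q < 2)
    (hgap : ∀ y : E, ‖y - xbar‖ < η → f xbar + g xbar < f y + g y →
      f y + g y < f xbar + g xbar + ν →
      μ * (f y + g y - (f xbar + g xbar)) ^ q ≤
        ((f y + g y) - bregEnv f f' g K K' ε y) / ε) :
    ∀ y : E, ‖y - xbar‖ < η → f xbar + g xbar < f y + g y →
      f y + g y < f xbar + g xbar + ν →
      ∀ ν' ∈ proxSubdiff g y,
        Real.sqrt (2 * (m - ε * ρ) * μ) * (f y + g y - (f xbar + g xbar)) ^ (q / 2) ≤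
          ‖f' y + ν'‖ := by
  intro y h1 h2 h3 w hw
  have hG := hgap y h1 h2 h3
  set s := f y + g y - (f xbar + g xbar) with hs
  have hs0 : 0 ≤ s := by linarith
  have hc : 0 < m - ε * ρ := by linarith
  set N := ‖f' y + w‖ with hN
  have hE : f y + g y - ε * (N ^ 2 / (2 * (m - ε * ρ))) ≤ bregEnv f f' g K K' ε y := by
    refine le_ciInf fun z => ?_
    have a1 := prox_global g ρ hsemi y w hw z
    have a2 : m / 2 * ‖z - y‖ ^ 2 ≤ bregD K K' y z := by
      have := hKstrong y z
      unfold bregD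
      linarith
    have a3 : (m / 2 * ‖z - y‖ ^ 2) / ε ≤ bregD K K' y z / ε :=
      div_le_div_of_nonneg_right a2 hε.le
    have a4 : -(N * ‖z - y‖) ≤ ⟪f' y + w, z - y⟫ :=
      (abs_le.1 (abs_real_inner_le_norm _ _)).1
    rw [inner_add_left] at a4
    have a5 : N * ‖z - y‖ ≤ ε * (N ^ 2 / (2 * (m - ε * ρ))) + (m / 2 * ‖z - y‖ ^ 2) / ε
        - ρ / 2 * ‖z - y‖ ^ 2 := by
      rw [← sub_nonneg]
      have : ε * (N ^ 2 / (2 * (m - ε * ρ))) + (m / 2 * ‖z - y‖ ^ 2) / ε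
        - ρ / 2 * ‖z - y‖ ^ 2 - N * ‖z - y‖
        = (ε * N - (m - ε * ρ) * ‖z - y‖) ^ 2 / (2 * ε * (m - ε * ρ)) := by
        have := hc.ne'
        field_simp
        ring
      rw [this]
      positivity
    linarith
  have hb : μ * s ^ q ≤ N ^ 2 / (2 * (m - ε * ρ)) := by
    refine hG.trans ?_
    rw [div_le_iff₀ hε]
    linarith
  rw [le_div_iff₀ (by positivity)] at hb
  refine le_of_abs_le (abs_le_of_sq_le_sq ?_ (norm_nonneg _))
  rw [mul_pow, Real.sq_sqrt (by positivity), ← Real.rpow_natCast (s ^ (q / 2)) 2,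
    ← Real.rpow_mul hs0]
  have : q / 2 * ((2 : ℕ) : ℝ) = q := by push_cast; ring
  rw [this]
  linarith
end
end

section
/- The level-set subdifferential error bound is strictly weaker than the KL property: fix x̄ ∈ ℝ and define ψ : ℝ → ℝ by ψ(x) = (1/2)(x − x̄)² for x ≠ x̄ and ψ(x̄) = −1. Then: (a) for every x ≠ x̄ and every ξ ∈ ∂_P ψ(x), infDist(x, {y | ψ(y) ≤ ψ(x̄)}) ≤ |ξ| (so the level-set subdifferential error bound holds at x̄ with exponent γ = 1 and constant c₃ = 1 on every set 𝔅(x̄;η,ν)); and (b) for all c > 0, α ∈ (0,1), η > 0 and ν > 0 such that 𝔅(x̄;η,ν) = {x | |x − x̄| < η and ψ(x̄) < ψ(x) < ψ(x̄) + ν} is nonempty, there exist x ∈ 𝔅(x̄;η,ν) and ξ ∈ ∂_P ψ(x) with |ξ| < c·(ψ(x) − ψ(x̄))^α (so the KL property with any exponent α fails at x̄). -/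
open Set Metric
open scoped Classical

noncomputable section

/-- The proximal subdifferential of `ψ : ℝ → ℝ` at `x`. -/
def proxSubdiffR (ψ : ℝ → ℝ) (x : ℝ) : Set ℝ :=
  {ξ | ∃ ρ > (0:ℝ), ∃ η > (0:ℝ), ∀ y, |y - x| < η →
    ψ y ≥ ψ x + ξ * (y - x) - ρ * (y - x) ^ 2}

/-- The level-set subdifferential error bound is strictly weaker than the KL property:
for `ψ(x) = (1/2)(x - xbar)²` for `x ≠ xbar` and `ψ(xbar) = -1`, the level-set subdifferential
error bound holds at `xbar` with exponent `γ = 1` and constant `c₃ = 1`, but the KL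
property fails at `xbar` for every exponent `α ∈ (0,1)`. -/
theorem stmt19 (xbar : ℝ) (ψ : ℝ → ℝ)
    (hψ : ψ = fun x => if x = xbar then -1 else 1 / 2 * (x - xbar) ^ 2) :
    (∀ x : ℝ, x ≠ xbar → ∀ ξ ∈ proxSubdiffR ψ x,
      Metric.infDist x {y : ℝ | ψ y ≤ ψ xbar} ≤ |ξ|) ∧
    (∀ c α η ν : ℝ, 0 < c → 0 < α → α < 1 → 0 < η → 0 < ν →
      (∃ x : ℝ, |x - xbar| < η ∧ ψ xbar < ψ x ∧ ψ x < ψ xbar + ν) →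
      ∃ x : ℝ, (|x - xbar| < η ∧ ψ xbar < ψ x ∧ ψ x < ψ xbar + ν) ∧
        ∃ ξ ∈ proxSubdiffR ψ x, |ξ| < c * (ψ x - ψ xbar) ^ α) := by
  have h0 : ψ xbar = -1 := by simp [hψ]
  have h1 : ∀ x, x ≠ xbar → ψ x = 1 / 2 * (x - xbar) ^ 2 := by
    intro x hx
    simp [hψ, hx]
  clear hψ
  constructor
  · rintro x hx ξ ⟨ρ, hρ, η, hη, h⟩
    have hd : 0 < |x - xbar| := abs_pos.mpr (sub_ne_zero.mpr hx)
    have key : ξ = x - xbar := by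
      by_contra hne
      have he : ξ - (x - xbar) ≠ 0 := sub_ne_zero.mpr hne
      obtain ⟨e, hee⟩ : ∃ e, e = ξ - (x - xbar) := ⟨_, rfl⟩
      rw [← hee] at he
      have hep : 0 < |e| := abs_pos.mpr he
      obtain ⟨m, hm⟩ : ∃ m, m = min η |x - xbar| := ⟨_, rfl⟩
      have hmp : 0 < m := by rw [hm]; exact lt_min hη hd
      have hm1 : m ≤ η := by rw [hm]; exact min_le_left _ _
      have hm2 : m ≤ |x - xbar| := by rw [hm]; exact min_le_right _ _
      obtain ⟨s, hs⟩ : ∃ s, s = min (1 / (1 + ρ)) (m / (2 * |e|)) := ⟨_, rfl⟩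
      have hsp : 0 < s := by rw [hs]; exact lt_min (by positivity) (by positivity)
      have hs1 : s * (1 + ρ) ≤ 1 := by
        rw [← le_div_iff₀ (by positivity), hs]; exact min_le_left _ _
      have hs2 : s * (2 * |e|) ≤ m := by
        rw [← le_div_iff₀ (by positivity), hs]; exact min_le_right _ _
      have hse : |s * e| = s * |e| := by rw [abs_mul, abs_of_pos hsp]
      have hsep : 0 < s * |e| := by positivity
      have hyx : x + s * e - x = s * e := by ring
      have hy : x + s * e ≠ xbar := by
        intro hy
        have h3 : x - xbar = -(s * e) := by linarith
        rw [h3, abs_neg, hse] at hm2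
        linarith
      have h2 := h (x + s * e) (by rw [hyx, hse]; linarith)
      rw [h1 _ hy, h1 _ hx, hyx] at h2
      have hξ : ξ = e + (x - xbar) := by linarith
      rw [hξ] at h2
      have h4 : s * e ^ 2 * (1 - s * (1 / 2 + ρ)) ≤ 0 := by linarith
      have h5 : 0 < s * e ^ 2 := by positivity
      have h6 : 0 < 1 - s * (1 / 2 + ρ) := by linarith
      have := mul_pos h5 h6
      linarith
    rw [key]
    have hmem : xbar ∈ {y : ℝ | ψ y ≤ ψ xbar} := le_refl (ψ xbar)
    have := Metric.infDist_le_dist_of_mem (x := x) hmem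
    rwa [Real.dist_eq] at this
  · rintro c α η ν hc hα hα1 hη hν ⟨z, hz1, hz2, hz3⟩
    have hz : z ≠ xbar := by
      rintro rfl
      exact lt_irrefl _ hz2
    have hd : 0 < |z - xbar| := abs_pos.mpr (sub_ne_zero.mpr hz)
    obtain ⟨t, ht⟩ : ∃ t, t = min |z - xbar| (c / 2) := ⟨_, rfl⟩
    have htp : 0 < t := by rw [ht]; exact lt_min hd (by positivity)
    have ht1 : t ≤ |z - xbar| := by rw [ht]; exact min_le_left _ _
    have ht2 : t ≤ c / 2 := by rw [ht]; exact min_le_right _ _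
    have hx : xbar + t ≠ xbar := by
      intro h
      linarith
    have hxt : xbar + t - xbar = t := by ring
    have hsq : t ^ 2 ≤ (z - xbar) ^ 2 := by
      rw [← sq_abs (z - xbar)]
      exact pow_le_pow_left₀ htp.le ht1 2
    rw [h1 z hz, h0] at hz3
    have hψx := h1 _ hx
    rw [hxt] at hψx
    refine ⟨xbar + t, ⟨?_, ?_, ?_⟩, t, ⟨1, one_pos, t, htp, ?_⟩, ?_⟩
    · rw [hxt, abs_of_pos htp]; linarith
    · rw [hψx, h0]; linarith [sq_nonneg t]
    · rw [hψx, h0]; linarith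
    · intro y hy
      have hyne : y ≠ xbar := by
        rintro rfl
        rw [abs_lt] at hy
        linarith [hy.1]
      rw [hψx, h1 y hyne]
      nlinarith [sq_nonneg (y - (xbar + t))]
    · rw [hψx, h0, abs_of_pos htp]
      have : (1:ℝ) ≤ (1 / 2 * t ^ 2 - -1) ^ α :=
        Real.one_le_rpow (by linarith [sq_nonneg t]) hα.le
      nlinarith
end
end
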